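/- Let M be a horizontally linked R-module of finite and positive G-dimension and set t_M = rgr(M) + rgr(λM). Then Gdim_{R_p}(M_p) = 0 for every prime p ∈ Spec R with depth R_p ≤ t_M − 1. -/

import Mathlib

open CategoryTheory

noncomputable section

universe u

/-- The `i`-th Ext group `Ext^i_R(M,N)`, as a type (with its `R`-module structure). -/
abbrev extM (R : Type u) [CommRing R] (i : ℕ) (M N : Type u) [AddCommGroup M] [Module R M]
    [AddCommGroup N] [Module R N] : Type u :=
  ((Ext R (ModuleCat.{u} R) i).obj (Opposite.op (ModuleCat.of R M))).obj (ModuleCat.of R N)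

/-- The `i`-th Tor group `Tor^R_i(M,N)`, as a type. -/
abbrev torM (R : Type u) [CommRing R] (i : ℕ) (M N : Type u) [AddCommGroup M] [Module R M]
    [AddCommGroup N] [Module R N] : Type u :=
  ((Tor (ModuleCat.{u} R) i).obj (ModuleCat.of R M)).obj (ModuleCat.of R N)

/-- The `i`-th local cohomology `H^i_I(M)`, as a type. -/
abbrev locCoh (R : Type u) [CommRing R] (I : Ideal R) (i : ℕ) (M : Type u) [AddCommGroup M]
    [Module R M] : Type u :=
  (localCohomology I i).obj (ModuleCat.of R M)

/-- A submodule `N ≤ M` is superfluous if `K ⊔ N = ⊤` implies `K = ⊤`. -/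
def Submodule.IsSuperfluous {R M : Type u} [CommRing R] [AddCommGroup M] [Module R M]
    (N : Submodule R M) : Prop :=
  ∀ K : Submodule R M, K ⊔ N = ⊤ → K = ⊤

/-- A minimal projective resolution of `M` by finitely generated projective modules:
each `P i → Ω^i M` is a projective cover (i.e. has superfluous kernel). -/
structure MinRes (R : Type u) [CommRing R] (M : Type u) [AddCommGroup M] [Module R M] where
  P : ℕ → ModuleCat.{u} R
  projective : ∀ i, Module.Projective R (P i)
  finite : ∀ i, Module.Finite R (P i)
  d : (i : ℕ) → (↥(P (i + 1)) →ₗ[R] ↥(P i))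
  ε : ↥(P 0) →ₗ[R] M
  surj : Function.Surjective ε
  exact0 : LinearMap.range (d 0) = LinearMap.ker ε
  exact : ∀ i, LinearMap.range (d (i + 1)) = LinearMap.ker (d i)
  min_eps : (LinearMap.ker ε).IsSuperfluous
  min_d : ∀ i, (LinearMap.ker (d i)).IsSuperfluous

namespace MinRes

variable {R M : Type u} [CommRing R] [AddCommGroup M] [Module R M]

/-- `T k F` is the Auslander-Bridger transpose `𝒯_{k+1} M = Tr Ω^k M`, computed as the
cokernel of `P_k* → P_{k+1}*`. -/
def T (F : MinRes R M) (k : ℕ) : Type u :=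
  (Module.Dual R ↥(F.P (k + 1))) ⧸ LinearMap.range (F.d k).dualMap

instance (F : MinRes R M) (k : ℕ) : AddCommGroup (F.T k) :=
  inferInstanceAs (AddCommGroup ((Module.Dual R ↥(F.P (k + 1))) ⧸
    LinearMap.range (F.d k).dualMap))

instance (F : MinRes R M) (k : ℕ) : Module R (F.T k) :=
  inferInstanceAs (Module R ((Module.Dual R ↥(F.P (k + 1))) ⧸
    LinearMap.range (F.d k).dualMap))

/-- The transpose `Tr M = coker(P₀* → P₁*)` computed from a minimal projective presentation. -/
abbrev Tr (F : MinRes R M) : Type u := F.T 0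

/-- `λM = ΩTr M`, realized as the image of `P₀* → P₁*` for a minimal projective
presentation `P₁ → P₀ → M → 0`. -/
def lambdaMod (F : MinRes R M) : Type u :=
  ↥(LinearMap.range (F.d 0).dualMap)

instance (F : MinRes R M) : AddCommGroup F.lambdaMod :=
  inferInstanceAs (AddCommGroup ↥(LinearMap.range (F.d 0).dualMap))

instance (F : MinRes R M) : Module R F.lambdaMod :=
  inferInstanceAs (Module R ↥(LinearMap.range (F.d 0).dualMap))

end MinRes

/-- `M` is a horizontally linked `R`-module, i.e. `M ≅ λλM`. -/
def IsHorizontallyLinked (R : Type u) [CommRing R] (M : Type u) [AddCommGroup M]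
    [Module R M] : Prop :=
  ∃ (F : MinRes R M) (G : MinRes R F.lambdaMod), Nonempty (G.lambdaMod ≃ₗ[R] M)

/-- `M` and `N` are horizontally linked to each other: `M ≅ λN` and `N ≅ λM`. -/
def MutuallyLinked (A : Type u) [CommRing A] (M N : Type u) [AddCommGroup M] [Module A M]
    [AddCommGroup N] [Module A N] : Prop :=
  ∃ (F : MinRes A M) (G : MinRes A N),
    Nonempty (F.lambdaMod ≃ₗ[A] N) ∧ Nonempty (G.lambdaMod ≃ₗ[A] M)

/-- `M` is linked to `N` by the ideal `c`: `c` annihilates both modules and they are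
horizontally linked to each other as `R ⧸ c`-modules. -/
def LinkedBy (R : Type u) [CommRing R] (c : Ideal R) (M N : Type u) [AddCommGroup M]
    [Module R M] [AddCommGroup N] [Module R N] : Prop :=
  ∃ (hM : Module.IsTorsionBySet R M c) (hN : Module.IsTorsionBySet R N c),
    letI := hM.module
    letI := hN.module
    MutuallyLinked (R ⧸ c) M N

/-- A stable module: no nonzero projective direct summand. -/
def IsStableModule (R : Type u) [CommRing R] (M : Type u) [AddCommGroup M] [Module R M] : Prop :=
  ∀ N : Submodule R M, Module.Projective R ↥N → (∃ N' : Submodule R M, IsCompl N N') → N = ⊥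

/-- `M` has G-dimension zero: `M` is finitely generated and reflexive,
and `Ext^i(M,R) = 0 = Ext^i(M*,R)` for all `i > 0`. -/
def IsGDimZero (R : Type u) [CommRing R] (M : Type u) [AddCommGroup M] [Module R M] : Prop :=
  Module.Finite R M ∧ Function.Bijective (Module.Dual.eval R M) ∧
    (∀ i : ℕ, 0 < i → Subsingleton (extM R i M R)) ∧
    (∀ i : ℕ, 0 < i → Subsingleton (extM R i (Module.Dual R M) R))

/-- `M` admits a resolution of length `≤ n` by modules of G-dimension zero. -/
def GDimLE (R : Type u) [CommRing R] : ℕ → ModuleCat.{u} R → Prop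
  | 0, M => IsGDimZero R ↥M
  | n + 1, M =>
    ∃ (G : ModuleCat.{u} R) (f : ↥G →ₗ[R] ↥M), IsGDimZero R ↥G ∧ Function.Surjective f ∧
      GDimLE R n (ModuleCat.of R ↥(LinearMap.ker f))

/-- The G-dimension of `M`: the minimal length of a resolution of `M` by modules of
G-dimension zero (`∞` if there is none). -/
def GDim (R : Type u) [CommRing R] (M : Type u) [AddCommGroup M] [Module R M] : ℕ∞ :=
  sInf {n : ℕ∞ | ∃ k : ℕ, n = k ∧ GDimLE R k (ModuleCat.of R M)}

/-- The reduced grade of `M`: `rgr M = inf{ i > 0 | Ext^i(M,R) ≠ 0 }`. -/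
def rgr (R : Type u) [CommRing R] (M : Type u) [AddCommGroup M] [Module R M] : ℕ∞ :=
  sInf {n : ℕ∞ | ∃ k : ℕ, n = k ∧ 0 < k ∧ ¬ Subsingleton (extM R k M R)}

/-- The grade of `M`: `gr M = inf{ i ≥ 0 | Ext^i(M,R) ≠ 0 }`. -/
def egrade (R : Type u) [CommRing R] (M : Type u) [AddCommGroup M] [Module R M] : ℕ∞ :=
  sInf {n : ℕ∞ | ∃ k : ℕ, n = k ∧ ¬ Subsingleton (extM R k M R)}

/-- `depth_I(M) = inf{ i | Ext^i(R/I, M) ≠ 0 }`; for `I` the maximal ideal of a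
local ring this is the depth of `M`. -/
def edepth (R : Type u) [CommRing R] (I : Ideal R) (M : Type u) [AddCommGroup M]
    [Module R M] : ℕ∞ :=
  sInf {n : ℕ∞ | ∃ k : ℕ, n = k ∧ ¬ Subsingleton (extM R k (R ⧸ I) M)}

/-- The depth of the local ring `R`. -/
def rdepth (R : Type u) [CommRing R] [IsLocalRing R] : ℕ∞ :=
  edepth R (IsLocalRing.maximalIdeal R) R

/-- `depth_{R_p}(M_p)`. -/
def locDepth (R : Type u) [CommRing R] (p : Ideal R) [p.IsPrime] (M : Type u) [AddCommGroup M]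
    [Module R M] : ℕ∞ :=
  edepth (Localization.AtPrime p) (IsLocalRing.maximalIdeal (Localization.AtPrime p))
    (LocalizedModule p.primeCompl M)

/-- `depth R_p`. -/
def locRingDepth (R : Type u) [CommRing R] (p : Ideal R) [p.IsPrime] : ℕ∞ :=
  rdepth (Localization.AtPrime p)

/-- `Gdim_{R_p}(M_p)`. -/
def locGDim (R : Type u) [CommRing R] (p : Ideal R) [p.IsPrime] (M : Type u) [AddCommGroup M]
    [Module R M] : ℕ∞ :=
  GDim (Localization.AtPrime p) (LocalizedModule p.primeCompl M)

/-- `rgr_{R_p}(M_p)`. -/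
def locRgr (R : Type u) [CommRing R] (p : Ideal R) [p.IsPrime] (M : Type u) [AddCommGroup M]
    [Module R M] : ℕ∞ :=
  rgr (Localization.AtPrime p) (LocalizedModule p.primeCompl M)

/-- `dim_{R_p}(M_p)`, the Krull dimension of the support of `M_p` over `R_p`. -/
def locDim (R : Type u) [CommRing R] (p : Ideal R) [p.IsPrime] (M : Type u) [AddCommGroup M]
    [Module R M] : WithBot ℕ∞ :=
  ringKrullDim ((Localization.AtPrime p) ⧸
    Module.annihilator (Localization.AtPrime p) (LocalizedModule p.primeCompl M))

/-- `M` satisfies the condition `S̃_k`: `depth_{R_p}(M_p) ≥ min{k, depth R_p}` for all primes. -/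
def Stilde (R : Type u) [CommRing R] (k : ℕ) (M : Type u) [AddCommGroup M] [Module R M] : Prop :=
  ∀ (p : Ideal R) (_ : p.IsPrime), min (k : ℕ∞) (locRingDepth R p) ≤ locDepth R p M

/-- `M` satisfies Serre's condition `(S_k)`:
`depth_{R_p}(M_p) ≥ min{k, dim_{R_p}(M_p)}` for all primes. -/
def SerreS (R : Type u) [CommRing R] (k : ℕ) (M : Type u) [AddCommGroup M] [Module R M] : Prop :=
  ∀ (p : Ideal R) (_ : p.IsPrime),
    min (k : WithBot ℕ∞) (locDim R p M) ≤ (locDepth R p M : WithBot ℕ∞)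

/-- `M` is a `k`-th syzygy module. -/
def IsKthSyzygy (R : Type u) [CommRing R] : ℕ → ModuleCat.{u} R → Prop
  | 0, _ => True
  | k + 1, M =>
    ∃ (P : ModuleCat.{u} R) (f : ↥M →ₗ[R] ↥P), Module.Projective R ↥P ∧ Module.Finite R ↥P ∧
      Function.Injective f ∧ IsKthSyzygy R k (ModuleCat.of R (↥P ⧸ LinearMap.range f))

/-- The `I`-torsion submodule `Γ_I(M) = { x | I^n x = 0 for some n }`. -/
def gammaTorsion (R : Type u) [CommRing R] (I : Ideal R) (M : Type u) [AddCommGroup M]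
    [Module R M] : Submodule R M where
  carrier := {x | ∃ n : ℕ, ∀ a ∈ I ^ n, a • x = 0}
  zero_mem' := ⟨0, fun a _ => smul_zero a⟩
  add_mem' := by
    rintro x y ⟨n, hn⟩ ⟨m, hm⟩
    exact ⟨n + m, fun a ha => by
      rw [smul_add, hn a (Ideal.pow_le_pow_right (Nat.le_add_right n m) ha),
        hm a (Ideal.pow_le_pow_right (Nat.le_add_left m n) ha), add_zero]⟩
  smul_mem' := by
    rintro c x ⟨n, hn⟩
    exact ⟨n, fun a ha => by rw [smul_comm, hn a ha, smul_zero]⟩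

/-- `N` has finite flat dimension (characterized by uniform vanishing of `Tor`). -/
def HasFiniteFlatDim (R : Type u) [CommRing R] (N : Type u) [AddCommGroup N] [Module R N] : Prop :=
  ∃ n : ℕ, ∀ i : ℕ, n < i → ∀ (M : ModuleCat.{u} R), Subsingleton (torM R i ↥M N)

/-- `N` has finite injective dimension (characterized by uniform vanishing of `Ext`). -/
def HasFiniteInjDim (R : Type u) [CommRing R] (N : Type u) [AddCommGroup N] [Module R N] : Prop :=
  ∃ n : ℕ, ∀ i : ℕ, n < i → ∀ (M : ModuleCat.{u} R), Subsingleton (extM R i ↥M N)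

/-- `K` is a semidualizing `R`-module. -/
def IsSemidualizing (R : Type u) [CommRing R] (K : Type u) [AddCommGroup K] [Module R K] : Prop :=
  Module.Finite R K ∧ Function.Bijective (LinearMap.lsmul R K) ∧
    ∀ i : ℕ, 0 < i → Subsingleton (extM R i K K)

/-- The biduality map `M → Hom(Hom(M,K),K)`. -/
def evalK (R : Type u) [CommRing R] (K M : Type u) [AddCommGroup K] [Module R K]
    [AddCommGroup M] [Module R M] : M →ₗ[R] ((M →ₗ[R] K) →ₗ[R] K) :=
  LinearMap.applyₗ

/-- `M` has `G_K`-dimension zero. -/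
def IsGKDimZero (R : Type u) [CommRing R] (K M : Type u) [AddCommGroup K] [Module R K]
    [AddCommGroup M] [Module R M] : Prop :=
  Module.Finite R M ∧ Function.Bijective (evalK R K M) ∧
    (∀ i : ℕ, 0 < i → Subsingleton (extM R i M K)) ∧
    (∀ i : ℕ, 0 < i → Subsingleton (extM R i (M →ₗ[R] K) K))

/-- `M` admits a resolution of length `≤ n` by modules of `G_K`-dimension zero. -/
def GKDimLE (R : Type u) [CommRing R] (K : Type u) [AddCommGroup K] [Module R K] :
    ℕ → ModuleCat.{u} R → Prop
  | 0, M => IsGKDimZero R K ↥M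
  | n + 1, M =>
    ∃ (G : ModuleCat.{u} R) (f : ↥G →ₗ[R] ↥M), IsGKDimZero R K ↥G ∧ Function.Surjective f ∧
      GKDimLE R K n (ModuleCat.of R ↥(LinearMap.ker f))

/-- The `G_K`-dimension of `M`. -/
def GKDim (R : Type u) [CommRing R] (K M : Type u) [AddCommGroup K] [Module R K]
    [AddCommGroup M] [Module R M] : ℕ∞ :=
  sInf {n : ℕ∞ | ∃ k : ℕ, n = k ∧ GKDimLE R K k (ModuleCat.of R M)}

/-- The grade of a module, `gr_R(M) = grade(Ann_R(M), R) = inf{i | Ext^i(R/Ann M, R) ≠ 0}`. -/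
def grAnn (R : Type u) [CommRing R] (M : Type u) [AddCommGroup M] [Module R M] : ℕ∞ :=
  egrade R (R ⧸ Module.annihilator R M)

/-- The grade of an ideal, `grade(I) = inf{i | Ext^i(R/I, R) ≠ 0}`. -/
def gradeI (R : Type u) [CommRing R] (I : Ideal R) : ℕ∞ :=
  egrade R (R ⧸ I)

/-- The ideal `I` is `G_K`-Gorenstein: `R/I` is `G_K`-perfect and `Ext^{gr I}(R/I, K)` is
cyclic. -/
def IsGKGorensteinIdeal (R : Type u) [CommRing R] (K : Type u) [AddCommGroup K] [Module R K]
    (I : Ideal R) : Prop :=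
  ∃ n : ℕ, grAnn R (R ⧸ I) = (n : ℕ∞) ∧ GKDim R K (R ⧸ I) = (n : ℕ∞) ∧
    ∃ x : extM R n (R ⧸ I) K, Submodule.span R {x} = ⊤

end

/-!
Since `M` has finite G-dimension, it sits in a short exact sequence `0 → M → X → G → 0` with `X` of
finite projective dimension and `G` of G-dimension zero, and it is enough to show that `X_p` is
projective: then `M_p` is a syzygy of `G_p`.

As `M ≅ λ(λM)`, dualizing a minimal resolution of `λM` exhibits `M` as a `b`-th syzygy for every
`b ≤ rgr(λM)`. Hence the first `b` terms of a maximal `R_p`-regular sequence are regular on `M_p`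
and on `G_p`, and so on `X_p`, while `Ext^i(X_p, R_p) = 0` for `0 < i < rgr(M)`. A syzygy of `X_p`
gains one regular element and loses one vanishing `Ext`. By induction on the projective dimension
the syzygy `K` in `0 → K → P → X_p → 0` is projective, and the sequence splits: either because
`Ext^1(X_p, R_p) = 0`, or, once the whole maximal sequence is regular on `X_p`, because a socle
element of `R_p` modulo that sequence forces `K → P` to be injective modulo the maximal ideal.
-/

/-- `0 → A → B → C → 0` is a short exact sequence of modules: the unbundled counterpart of
`CategoryTheory.ShortComplex.ShortExact`, stated for linear maps. -/
structure IsShortExact {R A B C : Type*} [CommRing R] [AddCommGroup A] [Module R A]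
    [AddCommGroup B] [Module R B] [AddCommGroup C] [Module R C]
    (f : A →ₗ[R] B) (g : B →ₗ[R] C) : Prop where
  injective : Function.Injective f
  exact : Function.Exact f g
  surjective : Function.Surjective g

section ShortExact

variable {R : Type u} [CommRing R]
variable {A B C D E : Type u} [AddCommGroup A] [Module R A] [AddCommGroup B] [Module R B]
  [AddCommGroup C] [Module R C] [AddCommGroup D] [Module R D] [AddCommGroup E] [Module R E]

namespace IsShortExact

variable {f : A →ₗ[R] B} {g : B →ₗ[R] C}

theorem comp_eq_zero (h : IsShortExact f g) : g ∘ₗ f = 0 :=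
  LinearMap.ext h.exact.apply_apply_eq_zero

theorem shortExact_mk (h : IsShortExact f g) :
    (ShortComplex.mk (ModuleCat.ofHom f) (ModuleCat.ofHom g)
      (ModuleCat.hom_ext h.comp_eq_zero)).ShortExact where
  exact := (ShortComplex.ShortExact.moduleCat_exact_iff_function_exact _).2 h.exact
  mono_f := (ModuleCat.mono_iff_injective _).2 h.injective
  epi_g := (ModuleCat.epi_iff_surjective _).2 h.surjective

theorem ker_subtype (hg : Function.Surjective g) : IsShortExact (LinearMap.ker g).subtype g :=
  ⟨Subtype.val_injective, g.exact_subtype_ker_map, hg⟩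

theorem mkQ_range (hf : Function.Injective f) : IsShortExact f (LinearMap.range f).mkQ :=
  ⟨hf, LinearMap.exact_iff.2 (Submodule.ker_mkQ _), Submodule.mkQ_surjective _⟩

theorem range_subtype (h : Function.Exact f g) :
    IsShortExact (LinearMap.range f).subtype g.rangeRestrict where
  injective := Submodule.subtype_injective _
  exact := by
    rw [LinearMap.exact_iff, LinearMap.ker_rangeRestrict, Submodule.range_subtype]
    exact h.linearMap_ker_eq
  surjective := g.surjective_rangeRestrict

theorem comp_equiv_left (h : IsShortExact f g) (e : D ≃ₗ[R] A) :
    IsShortExact (f ∘ₗ e.toLinearMap) g where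
  injective := h.injective.comp e.injective
  exact := by
    rw [LinearMap.exact_iff, LinearEquiv.range_comp]
    exact h.exact.linearMap_ker_eq
  surjective := h.surjective

theorem comp_equiv_middle (h : IsShortExact f g) (e : B ≃ₗ[R] D) :
    IsShortExact (e.toLinearMap ∘ₗ f) (g ∘ₗ e.symm.toLinearMap) where
  injective := e.injective.comp h.injective
  exact := by
    intro x
    have hx := h.exact (e.symm x)
    simp only [LinearMap.comp_apply, LinearEquiv.coe_coe, Set.mem_range] at hx ⊢
    simp only [hx, LinearEquiv.eq_symm_apply]
  surjective := h.surjective.comp e.symm.surjective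

theorem exists_comp_eq (h : IsShortExact f g) {φ : B →ₗ[R] D} (hφ : φ ∘ₗ f = 0) :
    ∃ ψ : C →ₗ[R] D, ψ ∘ₗ g = φ :=
  (LinearMap.exact_lcomp_of_exact_of_surjective D h.exact h.surjective φ).1 hφ

theorem dualMap (h : IsShortExact f g) (hf : Function.Surjective f.dualMap) :
    IsShortExact g.dualMap f.dualMap where
  injective := LinearMap.dualMap_injective_of_surjective h.surjective
  exact := LinearMap.exact_lcomp_of_exact_of_surjective R h.exact h.surjective
  surjective := hf

theorem projective_of_surjective_dualMap (h : IsShortExact f g) [Module.Finite R A]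
    [Module.Projective R A] [Module.Projective R B] (hf : Function.Surjective f.dualMap) :
    Module.Projective R C := by
  obtain ⟨n, p, s, -, -, hps⟩ := Module.Finite.exists_comp_eq_id_of_projective R A
  choose ψ hψ using fun i ↦ hf (LinearMap.proj i ∘ₗ s)
  have hs : LinearMap.pi ψ ∘ₗ f = s := by
    ext x i
    exact LinearMap.congr_fun (hψ i) x
  have hsplit : Function.Surjective g ∧ ∃ l, l ∘ₗ f = LinearMap.id :=
    ⟨h.surjective, p ∘ₗ LinearMap.pi ψ, by rw [LinearMap.comp_assoc, hs, hps]⟩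
  obtain ⟨-, l, hl⟩ : Function.Injective f ∧ ∃ l, g ∘ₗ l = LinearMap.id :=
    (h.exact.split_tfae'.out 1 0).1 hsplit
  exact .of_split l g hl

theorem finite_middle (h : IsShortExact f g) [Module.Finite R A] [Module.Finite R C] :
    Module.Finite R B :=
  have : Module.Finite R (B ⧸ LinearMap.range f) :=
    .equiv (h.exact.linearEquivOfSurjective h.surjective).symm
  .of_submodule_quotient (LinearMap.range f)

theorem exists_isShortExact_quotient_comp {c : B →ₗ[R] D} {d : D →ₗ[R] E} (h : IsShortExact f g)
    (h' : IsShortExact c d) : ∃ (u : C →ₗ[R] D ⧸ LinearMap.range (c ∘ₗ f))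
      (v : (D ⧸ LinearMap.range (c ∘ₗ f)) →ₗ[R] E), IsShortExact u v := by
  set Q := LinearMap.range (c ∘ₗ f)
  obtain ⟨u, hu⟩ := h.exists_comp_eq (φ := Q.mkQ ∘ₗ c) <| by
    rw [LinearMap.comp_assoc]
    exact LinearMap.range_mkQ_comp (c ∘ₗ f)
  have hu' (x : B) : u (g x) = Q.mkQ (c x) := LinearMap.congr_fun hu x
  have hQ : Q ≤ LinearMap.ker d := by
    rintro _ ⟨a, rfl⟩
    exact h'.exact.apply_apply_eq_zero (f a)
  refine ⟨u, Q.liftQ d hQ, ?_, ?_, ?_⟩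
  · rw [injective_iff_map_eq_zero]
    intro z hz
    obtain ⟨x, rfl⟩ := h.surjective z
    rw [hu', Submodule.mkQ_apply, Submodule.Quotient.mk_eq_zero] at hz
    obtain ⟨a, ha⟩ := hz
    rw [← h'.injective ha]
    exact h.exact.apply_apply_eq_zero a
  · intro z
    obtain ⟨y, rfl⟩ := Q.mkQ_surjective z
    rw [Submodule.mkQ_apply, Submodule.liftQ_apply, h'.exact y]
    constructor
    · rintro ⟨x, rfl⟩
      exact ⟨g x, hu' x⟩
    · rintro ⟨w, hw⟩
      obtain ⟨x, rfl⟩ := h.surjective w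
      rw [hu', Submodule.mkQ_apply, Submodule.Quotient.eq] at hw
      obtain ⟨a, ha⟩ := hw
      exact ⟨x - f a, by rw [map_sub, sub_eq_iff_eq_add, ← sub_eq_iff_eq_add', ← ha]; rfl⟩
  · intro e
    obtain ⟨y, rfl⟩ := h'.surjective e
    exact ⟨Q.mkQ y, rfl⟩

/-- The cobase change of `f` along `φ`, where the pushout is presented as the cokernel `π` of
`(φ, f) : A → D × B`. -/
theorem exists_isShortExact_pushout {φ : A →ₗ[R] D} {π : D × B →ₗ[R] E} (h : IsShortExact f g)
    (hπ : IsShortExact (φ.prod f) π) :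
    ∃ p : E →ₗ[R] C, IsShortExact (π ∘ₗ LinearMap.inl R D B) p := by
  obtain ⟨p, hp⟩ := hπ.exists_comp_eq (φ := g ∘ₗ LinearMap.snd R D B) <| by
    rw [LinearMap.comp_assoc, LinearMap.snd_prod, h.comp_eq_zero]
  have hp' (z : D × B) : p (π z) = g z.2 := LinearMap.congr_fun hp z
  refine ⟨p, ?_, ?_, fun c ↦ ?_⟩
  · rw [injective_iff_map_eq_zero]
    intro x hx
    obtain ⟨a, ha⟩ := (hπ.exact _).1 hx
    obtain ⟨hφ, hf⟩ := Prod.ext_iff.1 ha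
    have ha0 : a = 0 := h.injective (hf.trans (map_zero f).symm)
    rw [ha0] at hφ
    exact hφ.symm.trans (map_zero φ)
  · intro e
    obtain ⟨⟨x, y⟩, rfl⟩ := hπ.surjective e
    rw [hp', h.exact y]
    constructor
    · rintro ⟨a, rfl⟩
      refine ⟨x - φ a, ?_⟩
      have ha : π (φ a, f a) = 0 := hπ.exact.apply_apply_eq_zero a
      rw [← sub_zero (π (x, f a)), ← ha, ← map_sub]
      simp
    · rintro ⟨x', hx'⟩
      rw [← h.exact, ← hp' (x, y), ← hx']
      exact (hp' (x', 0)).trans (map_zero g)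
  · obtain ⟨y, rfl⟩ := h.surjective c
    exact ⟨π (0, y), hp' (0, y)⟩

end IsShortExact

end ShortExact

/-- `Ext^n_R(X, Y) = 0`, for Mathlib's `CategoryTheory.Abelian.Ext`, which carries the long exact
sequences; `extVanishes_iff_subsingleton_extM` compares it with `extM`. -/
def ExtVanishes (R : Type u) [CommRing R] (n : ℕ) (X Y : Type u) [AddCommGroup X] [Module R X]
    [AddCommGroup Y] [Module R Y] : Prop :=
  Subsingleton (Abelian.Ext (ModuleCat.of R X) (ModuleCat.of R Y) n)

section ExtVanishes

variable {R : Type u} [CommRing R] {n : ℕ}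
variable {A B C X Y : Type u} [AddCommGroup A] [Module R A] [AddCommGroup B] [Module R B]
  [AddCommGroup C] [Module R C] [AddCommGroup X] [Module R X] [AddCommGroup Y] [Module R Y]
variable {f : A →ₗ[R] B} {g : B →ₗ[R] C}

theorem extVanishes_iff_forall_eq_zero : ExtVanishes R n X Y ↔
    ∀ a : Abelian.Ext (ModuleCat.of R X) (ModuleCat.of R Y) n, a = 0 :=
  subsingleton_iff_forall_eq 0

theorem extVanishes_iff_subsingleton_extM :
    ExtVanishes R n X Y ↔ Subsingleton (extM R n X Y) := by
  let P := ProjectiveResolution.of (ModuleCat.of R X)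
  rw [(P.isoExt (R := R) n (ModuleCat.of R Y)).toLinearEquiv.toEquiv.subsingleton_congr,
    ← ModuleCat.isZero_iff_subsingleton, ← HomologicalComplex.exactAt_iff_isZero_homology,
    extVanishes_iff_forall_eq_zero]
  cases n with
  | zero =>
    rw [HomologicalComplex.exactAt_iff' _ 0 0 1 (by simp) (by simp),
      ShortComplex.moduleCat_exact_iff]
    constructor
    · intro h f hf
      refine ⟨0, ?_⟩
      have hdesc : P.exact₀.desc f hf = 0 := (Abelian.Ext.mk₀_eq_zero_iff _).1 (h _)
      rw [map_zero]
      exact (P.exact₀.g_desc f hf).symm.trans (hdesc ▸ Limits.comp_zero) |>.symm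
    · intro h a
      obtain ⟨f, hf, rfl⟩ := P.extMk_surjective a 1 rfl
      obtain ⟨z, hz⟩ := h f hf
      have hf0 : f = 0 := hz.symm.trans (congrArg (· ≫ z) (P.complex.shape 0 0 (by simp))
        |>.trans Limits.zero_comp)
      simp only [hf0, P.extMk_zero]
  | succ n =>
    rw [HomologicalComplex.exactAt_iff' _ n (n + 1) (n + 2) (by simp) (by simp),
      ShortComplex.moduleCat_exact_iff]
    constructor
    · exact fun h f hf ↦ (P.extMk_eq_zero_iff f (n + 2) rfl hf n rfl).1 (h _)
    · intro h a
      obtain ⟨f, hf, rfl⟩ := P.extMk_surjective a (n + 2) rfl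
      exact (P.extMk_eq_zero_iff _ _ _ _ n rfl).2 (h f hf)

namespace ExtVanishes

theorem of_isShortExact_middle (h : IsShortExact f g) (hA : ExtVanishes R n A Y)
    (hC : ExtVanishes R n C Y) : ExtVanishes R n B Y := by
  rw [extVanishes_iff_forall_eq_zero] at *
  intro b
  obtain ⟨c, rfl⟩ := Abelian.Ext.contravariant_sequence_exact₂ h.shortExact_mk _ b (hA _)
  rw [hC c, Abelian.Ext.comp_zero]

theorem of_isShortExact_right (h : IsShortExact f g) (hA : ExtVanishes R n A Y)
    (hB : ExtVanishes R (n + 1) B Y) : ExtVanishes R (n + 1) C Y := by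
  rw [extVanishes_iff_forall_eq_zero] at *
  intro c
  obtain ⟨a, rfl⟩ :=
    Abelian.Ext.contravariant_sequence_exact₃ h.shortExact_mk _ c (hB _) (add_comm 1 n)
  rw [hA a, Abelian.Ext.comp_zero]

theorem of_isShortExact_left (h : IsShortExact f g) (hB : ExtVanishes R n B Y)
    (hC : ExtVanishes R (n + 1) C Y) : ExtVanishes R n A Y := by
  rw [extVanishes_iff_forall_eq_zero] at *
  intro a
  obtain ⟨b, rfl⟩ :=
    Abelian.Ext.contravariant_sequence_exact₁ h.shortExact_mk _ a (add_comm 1 n) (hC _)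
  rw [hB b, Abelian.Ext.comp_zero]

theorem of_projective [Module.Projective R X] : ExtVanishes R (n + 1) X Y :=
  have : Projective (ModuleCat.of R X) := (IsProjective.iff_projective X).1 inferInstance
  Abelian.Ext.subsingleton_of_projective _ _ _

theorem congr (e : A ≃ₗ[R] B) (hA : ExtVanishes R n A Y) : ExtVanishes R n B Y :=
  (((Abelian.extFunctor n).mapIso e.toModuleIso.op).app
    (ModuleCat.of R Y)).addCommGroupIsoToAddEquiv.toEquiv.subsingleton_congr.2 hA

theorem iff_syzygy (h : IsShortExact f g) [Module.Projective R B] :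
    ExtVanishes R (n + 2) C Y ↔ ExtVanishes R (n + 1) A Y :=
  ⟨of_isShortExact_left h of_projective, fun hA ↦ of_isShortExact_right h hA of_projective⟩

theorem surjective_lcomp (hC : ExtVanishes R 1 C Y) (h : IsShortExact f g) :
    Function.Surjective (LinearMap.lcomp R Y f) := by
  intro φ
  obtain ⟨b, hb⟩ := Abelian.Ext.contravariant_sequence_exact₁ h.shortExact_mk (ModuleCat.of R Y)
    (Abelian.Ext.mk₀ (ModuleCat.ofHom φ)) (add_comm 1 0)
    (extVanishes_iff_forall_eq_zero.1 hC _)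
  obtain ⟨ψ, rfl⟩ := (Abelian.Ext.mk₀_bijective _ _).2 b
  rw [Abelian.Ext.mk₀_comp_mk₀] at hb
  exact ⟨ψ.hom, congrArg ModuleCat.Hom.hom ((Abelian.Ext.mk₀_bijective _ _).1 hb)⟩

theorem one_of_surjective_lcomp (h : IsShortExact f g) [Module.Projective R B]
    (hf : Function.Surjective (LinearMap.lcomp R Y f)) : ExtVanishes R 1 C Y := by
  rw [extVanishes_iff_forall_eq_zero]
  intro c
  obtain ⟨a, rfl⟩ := Abelian.Ext.contravariant_sequence_exact₃ h.shortExact_mk (ModuleCat.of R Y) c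
    (extVanishes_iff_forall_eq_zero.1 of_projective _) (add_comm 1 0)
  obtain ⟨φ, rfl⟩ := (Abelian.Ext.mk₀_bijective _ _).2 a
  obtain ⟨ψ, hψ⟩ := hf φ.hom
  have hφ : φ = ModuleCat.ofHom f ≫ ModuleCat.ofHom ψ := ModuleCat.hom_ext hψ.symm
  rw [hφ, ← Abelian.Ext.mk₀_comp_mk₀, h.shortExact_mk.extClass_comp_assoc]

end ExtVanishes

section SmulRegular

variable {r : R}

theorem ext_smul_eq_zero_of_smul_eq_zero (hX : ∀ x : X, r • x = 0)
    (a : Abelian.Ext (ModuleCat.of R X) (ModuleCat.of R Y) n) : r • a = 0 := by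
  have hid : r • 𝟙 (ModuleCat.of R X) = 0 := by
    ext x
    exact hX x
  rw [← Abelian.Ext.mk₀_id_comp a, ← Abelian.Ext.smul_comp, ← Abelian.Ext.mk₀_smul, hid,
    Abelian.Ext.mk₀_zero, Abelian.Ext.zero_comp]

namespace ExtVanishes

theorem zero_of_isSMulRegular (hX : ∀ x : X, r • x = 0) (hY : IsSMulRegular Y r) :
    ExtVanishes R 0 X Y := by
  rw [extVanishes_iff_forall_eq_zero]
  intro a
  obtain ⟨φ, rfl⟩ := (Abelian.Ext.mk₀_bijective _ _).2 a
  rw [Abelian.Ext.mk₀_eq_zero_iff]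
  ext x
  refine hY.right_eq_zero_of_smul ?_
  exact (map_smul φ.hom r x).symm.trans (by rw [hX x, map_zero])

theorem succ_of_quotSMulTop (hX : ∀ x : X, r • x = 0) (hY : IsSMulRegular Y r)
    (h : ExtVanishes R n X (QuotSMulTop r Y)) : ExtVanishes R (n + 1) X Y := by
  have hS := IsSMulRegular.smulShortComplex_shortExact (M := ModuleCat.of R Y) hY
  rw [extVanishes_iff_forall_eq_zero] at h ⊢
  intro a
  have ha : r • a = 0 := ext_smul_eq_zero_of_smul_eq_zero hX a
  rw [Abelian.Ext.smul_eq_comp_mk₀] at ha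
  obtain ⟨b, rfl⟩ := Abelian.Ext.covariant_sequence_exact₁ (ModuleCat.of R X) hS a ha rfl
  rw [h b]
  exact Abelian.Ext.zero_comp _ _ hS.extClass _ rfl

open RingTheory.Sequence in
theorem of_isWeaklyRegular {rs : List R} (hX : ∀ r ∈ rs, ∀ x : X, r • x = 0)
    (hY : IsWeaklyRegular Y rs) (hn : n < rs.length) : ExtVanishes R n X Y := by
  induction rs generalizing Y n with
  | nil => exact absurd hn n.not_lt_zero
  | cons r rs ih =>
    rw [isWeaklyRegular_cons_iff] at hY
    have hr := hX r List.mem_cons_self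
    cases n with
    | zero => exact zero_of_isSMulRegular hr hY.1
    | succ n =>
      exact succ_of_quotSMulTop hr hY.1
        (ih (fun r' hr' ↦ hX r' (List.mem_cons_of_mem r hr')) hY.2 (Nat.lt_of_succ_lt_succ hn))

end ExtVanishes

end SmulRegular

end ExtVanishes

section GDimZero

variable {R : Type u} [CommRing R]
variable {A B C G : Type u} [AddCommGroup A] [Module R A] [AddCommGroup B] [Module R B]
  [AddCommGroup C] [Module R C] [AddCommGroup G] [Module R G]
variable {f : A →ₗ[R] B} {g : B →ₗ[R] C}

theorem isGDimZero_iff : IsGDimZero R G ↔ Module.Finite R G ∧ Module.IsReflexive R G ∧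
    (∀ n, ExtVanishes R (n + 1) G R) ∧ ∀ n, ExtVanishes R (n + 1) (Module.Dual R G) R := by
  have hpos (p : ℕ → Prop) : (∀ i, 0 < i → p i) ↔ ∀ n, p (n + 1) :=
    ⟨fun h n ↦ h _ n.succ_pos, fun h _ hi ↦ Nat.succ_pred_eq_of_pos hi ▸ h _⟩
  simp only [IsGDimZero, extVanishes_iff_subsingleton_extM, hpos]
  exact and_congr_right' (and_congr_left' ⟨fun h ↦ ⟨h⟩, fun h ↦ h.1⟩)

theorem injective_dual_eval_of_injective [Module.IsReflexive R B] (hf : Function.Injective f) :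
    Function.Injective (Module.Dual.eval R A) := by
  have hcomp : f.dualMap.dualMap ∘ₗ Module.Dual.eval R A = Module.Dual.eval R B ∘ₗ f := rfl
  refine Function.Injective.of_comp (f := f.dualMap.dualMap) ?_
  rw [← LinearMap.coe_comp, hcomp]
  exact (Module.bijective_dual_eval R B).1.comp hf

namespace IsShortExact

theorem surjective_dual_eval_left (h : IsShortExact f g) [Module.IsReflexive R B]
    (hf : Function.Surjective f.dualMap) (hC : Function.Injective (Module.Dual.eval R C)) :
    Function.Surjective (Module.Dual.eval R A) := by
  refine LinearMap.surjective_of_surjective_of_injective_of_left_exact f g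
    f.dualMap.dualMap g.dualMap.dualMap _ _ _ rfl rfl h.exact ?_
    (Module.bijective_dual_eval R B).2 hC (LinearMap.dualMap_injective_of_surjective hf)
  exact LinearMap.exact_lcomp_of_exact_of_surjective R (h.dualMap hf).exact hf

theorem extVanishes_one_dual (h : IsShortExact f g) [Module.Finite R B] [Module.Projective R B]
    (hf : Function.Surjective f.dualMap) (hC : Function.Surjective (Module.Dual.eval R C)) :
    ExtVanishes R 1 (Module.Dual R A) R := by
  refine ExtVanishes.one_of_surjective_lcomp (h.dualMap hf) fun φ ↦ ?_
  obtain ⟨c, rfl⟩ := hC φ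
  obtain ⟨b, rfl⟩ := h.surjective c
  exact ⟨Module.Dual.eval R B b, rfl⟩

end IsShortExact

namespace IsGDimZero

theorem finite (hG : IsGDimZero R G) : Module.Finite R G := hG.1

theorem isReflexive (hG : IsGDimZero R G) : Module.IsReflexive R G := ⟨hG.2.1⟩

theorem extVanishes (hG : IsGDimZero R G) (n : ℕ) : ExtVanishes R (n + 1) G R :=
  (isGDimZero_iff.1 hG).2.2.1 n

theorem extVanishes_dual (hG : IsGDimZero R G) (n : ℕ) :
    ExtVanishes R (n + 1) (Module.Dual R G) R :=
  (isGDimZero_iff.1 hG).2.2.2 n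

theorem surjective_dualMap (hC : IsGDimZero R C) (h : IsShortExact f g) :
    Function.Surjective f.dualMap :=
  (hC.extVanishes 0).surjective_lcomp h

theorem dual [IsNoetherianRing R] (hG : IsGDimZero R G) : IsGDimZero R (Module.Dual R G) := by
  have := hG.finite
  have := hG.isReflexive
  exact isGDimZero_iff.2 ⟨inferInstance, inferInstance, hG.extVanishes_dual,
    fun n ↦ (hG.extVanishes n).congr (Module.evalEquiv R G)⟩

theorem of_isShortExact_middle (h : IsShortExact f g) (hA : IsGDimZero R A)
    (hC : IsGDimZero R C) : IsGDimZero R B := by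
  have := hA.finite
  have := hC.finite
  have hdual := h.dualMap (hC.surjective_dualMap h)
  have hbidual := hdual.dualMap ((hA.extVanishes_dual 0).surjective_lcomp hdual)
  have hB : Function.Bijective (Module.Dual.eval R B) := by
    exact LinearMap.bijective_of_surjective_of_bijective_of_bijective_of_injective
      (0 : PUnit →ₗ[R] A) f g (0 : C →ₗ[R] PUnit) (0 : PUnit →ₗ[R] _) f.dualMap.dualMap
      g.dualMap.dualMap (0 : _ →ₗ[R] PUnit) 0 _ _ _ 0 (by simp) rfl rfl (by simp)
      ((LinearMap.exact_zero_iff_injective _ _).2 h.injective) h.exact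
      ((LinearMap.exact_zero_iff_surjective _ _).2 h.surjective)
      ((LinearMap.exact_zero_iff_injective _ _).2 hbidual.injective) hbidual.exact
      ((LinearMap.exact_zero_iff_surjective _ _).2 hbidual.surjective)
      (fun _ ↦ ⟨0, rfl⟩) hA.2.1 hC.2.1 (fun _ _ _ ↦ rfl)
  exact isGDimZero_iff.2 ⟨h.finite_middle, ⟨hB⟩,
    fun n ↦ .of_isShortExact_middle h (hA.extVanishes n) (hC.extVanishes n),
    fun n ↦ .of_isShortExact_middle hdual (hC.extVanishes_dual n) (hA.extVanishes_dual n)⟩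

theorem of_isShortExact_left [IsNoetherianRing R] (h : IsShortExact f g) [Module.Finite R B]
    [Module.Projective R B] (hC : IsGDimZero R C) : IsGDimZero R A := by
  have hf := hC.surjective_dualMap h
  refine isGDimZero_iff.2 ⟨.of_injective f h.injective,
    ⟨injective_dual_eval_of_injective h.injective, h.surjective_dual_eval_left hf hC.2.1.1⟩,
    fun n ↦ (ExtVanishes.iff_syzygy h).1 (hC.extVanishes (n + 1)), fun n ↦ ?_⟩
  cases n with
  | zero => exact h.extVanishes_one_dual hf hC.2.1.2
  | succ n => exact (ExtVanishes.iff_syzygy (h.dualMap hf)).2 (hC.extVanishes_dual n)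

theorem exists_cosyzygy [IsNoetherianRing R] (hG : IsGDimZero R G) :
    ∃ (P G' : ModuleCat.{u} R) (i : G →ₗ[R] P) (q : P →ₗ[R] G'),
      IsShortExact i q ∧ Module.Finite R P ∧ Module.Projective R P ∧ IsGDimZero R G' := by
  have := hG.finite
  have := hG.isReflexive
  obtain ⟨m, g, hg⟩ := Module.Finite.exists_fin' R (Module.Dual R G)
  have hker := IsShortExact.ker_subtype hg
  have hdual := hker.dualMap (hG.dual.surjective_dualMap hker)
  exact ⟨ModuleCat.of R (Module.Dual R (Fin m → R)),
    ModuleCat.of R (Module.Dual R (LinearMap.ker g)), _, _,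
    hdual.comp_equiv_left (Module.evalEquiv R G),
    inferInstanceAs (Module.Finite R (Module.Dual R (Fin m → R))),
    inferInstanceAs (Module.Projective R (Module.Dual R (Fin m → R))),
    (of_isShortExact_left hker hG.dual).dual⟩

end IsGDimZero

end GDimZero

section FiniteProjectiveHull

variable {R : Type u} [CommRing R]

theorem IsShortExact.hasProjectiveDimensionLE_iff {A B C : Type u} [AddCommGroup A] [Module R A]
    [AddCommGroup B] [Module R B] [AddCommGroup C] [Module R C] {f : A →ₗ[R] B} {g : B →ₗ[R] C}
    (h : IsShortExact f g) [Module.Projective R B] {n : ℕ} :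
    HasProjectiveDimensionLE (ModuleCat.of R C) (n + 1) ↔
      HasProjectiveDimensionLE (ModuleCat.of R A) n :=
  h.shortExact_mk.hasProjectiveDimensionLT_X₃_iff n
    ((IsProjective.iff_projective B).1 inferInstance)

theorem hasProjectiveDimensionLE_zero_iff {M : ModuleCat.{u} R} :
    HasProjectiveDimensionLE M 0 ↔ Module.Projective R M :=
  projective_iff_hasProjectiveDimensionLT_one.symm.trans (IsProjective.iff_projective M).symm

theorem IsGDimZero.exists_isShortExact_pushout {K X G₀ G M : Type u} [AddCommGroup K]
    [Module R K] [AddCommGroup X] [Module R X] [AddCommGroup G₀] [Module R G₀] [AddCommGroup G]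
    [Module R G] [AddCommGroup M] [Module R M]
    {i : K →ₗ[R] G₀} {q : G₀ →ₗ[R] M} {f : K →ₗ[R] X} {g : X →ₗ[R] G}
    (hq : IsShortExact i q) (hf : IsShortExact f g) (hG₀ : IsGDimZero R G₀) (hG : IsGDimZero R G) :
    ∃ (Y : ModuleCat.{u} R) (j : X →ₗ[R] Y) (p : Y →ₗ[R] M), IsShortExact j p ∧ IsGDimZero R Y := by
  have hinj : Function.Injective (f.prod i) := fun x y hxy ↦ hf.injective (Prod.ext_iff.1 hxy).1
  have hπ := IsShortExact.mkQ_range hinj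
  have hπ' := hπ.comp_equiv_middle (LinearEquiv.prodComm R X G₀)
  obtain ⟨p, hp⟩ := hq.exists_isShortExact_pushout hπ
  obtain ⟨p', hp'⟩ := hf.exists_isShortExact_pushout (φ := i) hπ'
  exact ⟨ModuleCat.of R _, _, p, hp, .of_isShortExact_middle hp' hG₀ hG⟩

theorem GDimLE.exists_finite_projective_hull [IsNoetherianRing R] {n : ℕ} {M : ModuleCat.{u} R}
    (hM : GDimLE R n M) : ∃ (X G : ModuleCat.{u} R) (f : M →ₗ[R] X) (g : X →ₗ[R] G),
      IsShortExact f g ∧ Module.Finite R X ∧ HasProjectiveDimensionLE X n ∧ IsGDimZero R G := by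
  induction n generalizing M with
  | zero =>
    obtain ⟨P, G, i, q, hi, hfin, hproj, hG⟩ := IsGDimZero.exists_cosyzygy hM
    exact ⟨P, G, i, q, hi, hfin, hasProjectiveDimensionLE_zero_iff.2 hproj, hG⟩
  | succ n ih =>
    obtain ⟨G₀, q, hG₀, hq, hK⟩ := hM
    obtain ⟨X, G, f, g, hfg, -, hX, hG⟩ := ih hK
    obtain ⟨Y, j, p, hjp, hY⟩ :=
      IsGDimZero.exists_isShortExact_pushout (.ker_subtype hq) hfg hG₀ hG
    obtain ⟨P, G', i, r, hir, hfin, hproj, hG'⟩ := hY.exists_cosyzygy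
    obtain ⟨u, v, huv⟩ := hjp.exists_isShortExact_quotient_comp hir
    refine ⟨ModuleCat.of R (P ⧸ LinearMap.range (i ∘ₗ j)), G', u, v, huv,
      inferInstanceAs (Module.Finite R (P ⧸ LinearMap.range (i ∘ₗ j))), ?_, hG'⟩
    exact (IsShortExact.mkQ_range (f := i ∘ₗ j)
      (hir.injective.comp hjp.injective)).hasProjectiveDimensionLE_iff.2 hX

end FiniteProjectiveHull

section RegularSequence

open RingTheory.Sequence

variable {R : Type u} [CommRing R] {rs : List R}
variable {A B C X : Type u} [AddCommGroup A] [Module R A] [AddCommGroup B] [Module R B]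
  [AddCommGroup C] [Module R C] [AddCommGroup X] [Module R X]
variable {f : A →ₗ[R] B} {g : B →ₗ[R] C}

theorem isWeaklyRegular_take (h : IsWeaklyRegular X rs) (k : ℕ) :
    IsWeaklyRegular X (rs.take k) := by
  rw [← List.take_append_drop k rs, isWeaklyRegular_append_iff] at h
  exact h.1

theorem isWeaklyRegular_of_flat [Module.Flat R X] (h : IsWeaklyRegular R rs) :
    IsWeaklyRegular X rs :=
  ((TensorProduct.lid R X).isWeaklyRegular_congr rs).1 h.isWeaklyRegular_rTensor

namespace IsShortExact

theorem quotSMulTop (h : IsShortExact f g) {r : R} (hC : IsSMulRegular C r) :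
    IsShortExact (QuotSMulTop.map r f) (QuotSMulTop.map r g) where
  injective := by
    have hf : Function.Exact (0 : PUnit →ₗ[R] A) f :=
      (LinearMap.exact_zero_iff_injective _ _).2 h.injective
    have hf' := QuotSMulTop.map_first_exact_on_four_term_exact_of_isSMulRegular_last hf h.exact hC
    rw [map_zero] at hf'
    exact (LinearMap.exact_zero_iff_injective _ _).1 hf'
  exact := QuotSMulTop.map_exact r h.exact h.surjective
  surjective := QuotSMulTop.map_surjective r h.surjective

theorem isWeaklyRegular_left (h : IsShortExact f g) {k : ℕ}
    (hB : IsWeaklyRegular B (rs.take (k + 1))) (hC : IsWeaklyRegular C (rs.take k)) :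
    IsWeaklyRegular A (rs.take (k + 1)) := by
  induction rs generalizing k A B C with
  | nil => exact .nil R A
  | cons r rs ih =>
    rw [List.take_succ_cons, isWeaklyRegular_cons_iff] at hB ⊢
    refine ⟨hB.1.of_injective f h.injective, ?_⟩
    cases k with
    | zero => exact .nil R _
    | succ k =>
      rw [List.take_succ_cons, isWeaklyRegular_cons_iff] at hC
      exact ih (h.quotSMulTop hC.1) hB.2 hC.2

theorem isWeaklyRegular_middle (h : IsShortExact f g) (hA : IsWeaklyRegular A rs)
    (hC : IsWeaklyRegular C rs) : IsWeaklyRegular B rs := by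
  induction rs generalizing A B C with
  | nil => exact .nil R B
  | cons r rs ih =>
    rw [isWeaklyRegular_cons_iff] at hA hC ⊢
    exact ⟨isSMulRegular_of_range_eq_ker h.injective h.exact.linearMap_ker_eq.symm hA.1 hC.1,
      ih (h.quotSMulTop hC.1) hA.2 hC.2⟩

theorem mem_ofList_smul_top_of_apply_mem (h : IsShortExact f g) (hC : IsWeaklyRegular C rs) {a : A}
    (ha : f a ∈ (Ideal.ofList rs • ⊤ : Submodule R B)) :
    a ∈ (Ideal.ofList rs • ⊤ : Submodule R A) := by
  have hf : Function.Exact (0 : PUnit →ₗ[R] A) f :=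
    (LinearMap.exact_zero_iff_injective _ _).2 h.injective
  have hf' := map_first_exact_on_four_term_right_exact_of_isSMulRegular_last
    hf h.exact h.surjective hC
  rw [← Submodule.Quotient.mk_eq_zero] at ha ⊢
  obtain ⟨z, hz⟩ := (hf' (Submodule.Quotient.mk a)).1 ha
  obtain ⟨y, rfl⟩ := Submodule.mkQ_surjective _ z
  exact hz.symm

end IsShortExact

theorem IsKthSyzygy.isWeaklyRegular_take {k : ℕ} {M : ModuleCat.{u} R} (hM : IsKthSyzygy R k M)
    (h : IsWeaklyRegular R rs) : IsWeaklyRegular M (rs.take k) := by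
  induction k generalizing M with
  | zero => exact .nil R M
  | succ k ih =>
    obtain ⟨P, f, hP, -, hf, hC⟩ := hM
    exact (IsShortExact.mkQ_range hf).isWeaklyRegular_left
      (isWeaklyRegular_of_flat (_root_.isWeaklyRegular_take h _)) (ih hC)

end RegularSequence

section MaximalRegularSequence

open RingTheory.Sequence IsLocalRing TensorProduct

variable {R : Type u} [CommRing R]

theorem one_tmul_eq_zero_iff_mem_smul_top {M : Type*} [AddCommGroup M] [Module R M] {I : Ideal R}
    {x : M} : (1 : R ⧸ I) ⊗ₜ[R] x = 0 ↔ x ∈ (I • ⊤ : Submodule R M) := by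
  rw [← (quotTensorEquivQuotSMul M I).map_eq_zero_iff, ← Submodule.Quotient.mk_eq_zero,
    ← map_one (Ideal.Quotient.mk I), quotTensorEquivQuotSMul_mk_tmul, one_smul]

theorem mem_smul_top_of_forall_dual_apply_mem {M : Type*} [AddCommGroup M] [Module R M]
    [Module.Free R M] {I : Ideal R} {x : M} (h : ∀ φ : Module.Dual R M, φ x ∈ I) :
    x ∈ (I • ⊤ : Submodule R M) := by
  rw [← (Module.Free.chooseBasis R M).linearCombination_repr x]
  exact Submodule.sum_mem _ fun i _ ↦ Submodule.smul_mem_smul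
    (h ((Module.Free.chooseBasis R M).coord i)) trivial

theorem dual_apply_mem_of_mem_smul_top {M : Type*} [AddCommGroup M] [Module R M] {I : Ideal R}
    {x : M} (hx : x ∈ (I • ⊤ : Submodule R M)) (φ : Module.Dual R M) : φ x ∈ I := by
  simpa using Submodule.smul_top_le_comap_smul_top I φ hx

variable [IsLocalRing R]

theorem lTensor_residueField_injective {A B : Type*} [AddCommGroup A] [Module R A]
    [AddCommGroup B] [Module R B] {f : A →ₗ[R] B}
    (hf : ∀ a, f a ∈ (maximalIdeal R • ⊤ : Submodule R B) →
      a ∈ (maximalIdeal R • ⊤ : Submodule R A)) :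
    Function.Injective (f.lTensor (ResidueField R)) := by
  rw [injective_iff_map_eq_zero]
  intro z hz
  obtain ⟨a, rfl⟩ := TensorProduct.mk_surjective R A (ResidueField R) residue_surjective z
  exact one_tmul_eq_zero_iff_mem_smul_top.2 (hf a (one_tmul_eq_zero_iff_mem_smul_top.1 hz))

theorem exists_socle_of_forall_not_isSMulRegular [IsNoetherianRing R] {I : Ideal R}
    (h : ∀ r ∈ maximalIdeal R, ¬ IsSMulRegular (R ⧸ I) r) :
    ∃ s ∉ I, ∀ m ∈ maximalIdeal R, m * s ∈ I := by
  have hne : ¬ Subsingleton ((R ⧸ maximalIdeal R) →ₗ[R] (R ⧸ I)) := by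
    rw [IsSMulRegular.subsingleton_linearMap_iff, Ideal.annihilator_quotient]
    push Not
    exact h
  rw [not_subsingleton_iff_nontrivial] at hne
  obtain ⟨φ, hφ⟩ := exists_ne (0 : (R ⧸ maximalIdeal R) →ₗ[R] (R ⧸ I))
  obtain ⟨s, hs⟩ := Ideal.Quotient.mk_surjective (φ 1)
  refine ⟨s, fun hsI ↦ hφ ?_, fun m hm ↦ ?_⟩
  · ext
    exact hs.symm.trans (Ideal.Quotient.eq_zero_iff_mem.2 hsI)
  · rw [← Ideal.Quotient.eq_zero_iff_mem, map_mul, hs]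
    calc Ideal.Quotient.mk I m * φ 1 = φ (m • 1) := (map_smul φ m 1).symm
      _ = φ (Ideal.Quotient.mk _ m) := by rw [Algebra.smul_def, mul_one]; rfl
      _ = 0 := by rw [Ideal.Quotient.eq_zero_iff_mem.2 hm, map_zero]

theorem ofList_lt_ofList_append {rs : List R} {r : R} (hrs : ∀ r ∈ rs, r ∈ maximalIdeal R)
    (hr : IsSMulRegular (R ⧸ Ideal.ofList rs) r) :
    Ideal.ofList rs < Ideal.ofList (rs ++ [r]) := by
  rw [Ideal.ofList_append]
  refine lt_of_le_of_ne le_sup_left fun heq ↦ ?_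
  have hmem : r ∈ Ideal.ofList rs := heq ▸ Ideal.mem_sup_right (Ideal.subset_span (by simp))
  have hle : Ideal.ofList rs ≤ maximalIdeal R := Ideal.span_le.2 hrs
  have hone : (1 : R ⧸ Ideal.ofList rs) = 0 := by
    refine hr.right_eq_zero_of_smul ?_
    rw [Algebra.smul_def, mul_one]
    exact Ideal.Quotient.eq_zero_iff_mem.2 hmem
  exact (Ideal.ne_top_iff_one _).1 (maximalIdeal.isMaximal R).ne_top
    (hle (Ideal.Quotient.eq_zero_iff_mem.1 hone))

/-- A maximal regular sequence in a local ring `R`. Maximality is encoded as the existence of a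
nonzero socle element of `R ⧸ (rs)`, which is how it enters the arguments. -/
structure IsMaximalRegularSequence (rs : List R) : Prop where
  isWeaklyRegular : IsWeaklyRegular R rs
  mem_maximalIdeal : ∀ r ∈ rs, r ∈ maximalIdeal R
  exists_socle : ∃ s ∉ Ideal.ofList rs, ∀ m ∈ maximalIdeal R, m * s ∈ Ideal.ofList rs

variable (R) in
theorem exists_isMaximalRegularSequence [IsNoetherianRing R] :
    ∃ rs : List R, IsMaximalRegularSequence rs := by
  obtain ⟨_, ⟨rs, ⟨hrs, hreg⟩, rfl⟩, hmax⟩ := set_has_maximal_iff_noetherian.2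
    (inferInstance : IsNoetherian R R)
    (Ideal.ofList '' {rs : List R | (∀ r ∈ rs, r ∈ maximalIdeal R) ∧ IsWeaklyRegular R rs})
    ⟨_, [], ⟨by simp, .nil R R⟩, rfl⟩
  refine ⟨rs, hreg, hrs, exists_socle_of_forall_not_isSMulRegular fun r hr hrreg ↦ ?_⟩
  refine hmax _ ⟨rs ++ [r], ⟨?_, ?_⟩, rfl⟩ (ofList_lt_ofList_append hrs hrreg)
  · simpa [or_imp, forall_and] using ⟨hrs, hr⟩
  · rw [isWeaklyRegular_append_iff, isWeaklyRegular_singleton_iff]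
    refine ⟨hreg, ?_⟩
    rwa [smul_eq_mul, Ideal.mul_top]

namespace IsMaximalRegularSequence

variable {rs : List R}

theorem length_le_rdepth (hrs : IsMaximalRegularSequence rs) : rs.length ≤ rdepth R := by
  refine le_sInf ?_
  rintro _ ⟨k, rfl, hk⟩
  rw [← extVanishes_iff_subsingleton_extM] at hk
  refine Nat.cast_le.2 (not_lt.1 fun hlt ↦ hk ?_)
  refine .of_isWeaklyRegular (fun r hr x ↦ ?_) hrs.isWeaklyRegular hlt
  obtain ⟨y, rfl⟩ := Ideal.Quotient.mk_surjective x
  exact Ideal.Quotient.eq_zero_iff_mem.2 (Ideal.mul_mem_right y _ (hrs.mem_maximalIdeal r hr))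

variable {A B C X : Type u} [AddCommGroup A] [Module R A] [AddCommGroup B] [Module R B]
  [AddCommGroup C] [Module R C] [AddCommGroup X] [Module R X]
variable {f : A →ₗ[R] B} {g : B →ₗ[R] C}

theorem mem_maximalIdeal_smul_top_of_apply_mem (hrs : IsMaximalRegularSequence rs)
    (h : IsShortExact f g) [Module.Free R A] (hC : IsWeaklyRegular C rs) {a : A}
    (ha : f a ∈ (maximalIdeal R • ⊤ : Submodule R B)) :
    a ∈ (maximalIdeal R • ⊤ : Submodule R A) := by
  -- A socle element `s` sends `a` into `(rs) A`; a unit coordinate of `a` would put `s` in `(rs)`.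
  obtain ⟨s, hs, hsocle⟩ := hrs.exists_socle
  have hfa : f (s • a) ∈ (Ideal.ofList rs • ⊤ : Submodule R B) := by
    rw [map_smul]
    refine Submodule.smul_induction_on ha (fun m hm b _ ↦ ?_) fun b b' hb hb' ↦ ?_
    · rw [smul_smul, mul_comm]
      exact Submodule.smul_mem_smul (hsocle m hm) trivial
    · rw [smul_add]
      exact add_mem hb hb'
  have hsa := h.mem_ofList_smul_top_of_apply_mem hC hfa
  refine mem_smul_top_of_forall_dual_apply_mem fun φ ↦
    (IsLocalRing.mem_maximalIdeal _).2 fun hunit ↦ hs ?_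
  have hφ := dual_apply_mem_of_mem_smul_top hsa φ
  rwa [map_smul, smul_eq_mul, Ideal.mul_unit_mem_iff_mem _ hunit] at hφ

theorem projective_of_isShortExact (hrs : IsMaximalRegularSequence rs) (h : IsShortExact f g)
    [Module.Finite R A] [Module.Projective R A] [Module.Finite R B] [Module.Projective R B]
    (hC : IsWeaklyRegular C rs) : Module.Projective R C := by
  have : Module.Free R A := Module.free_of_flat_of_isLocalRing
  have : Module.Free R B := Module.free_of_flat_of_isLocalRing
  have : Module.Free R C := Module.free_of_lTensor_residueField_injective f g h.surjective h.exact
    (lTensor_residueField_injective fun _ ↦ hrs.mem_maximalIdeal_smul_top_of_apply_mem h hC)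
  infer_instance

theorem projective_of_hasProjectiveDimensionLE [IsNoetherianRing R] [Module.Finite R X]
    (hrs : IsMaximalRegularSequence rs) {n a b : ℕ}
    (hpd : HasProjectiveDimensionLE (ModuleCat.of R X) n)
    (hExt : ∀ i < a, ExtVanishes R (i + 1) X R) (hX : IsWeaklyRegular X (rs.take b))
    (hlen : rs.length ≤ a + b) : Module.Projective R X := by
  -- Passing to a syzygy trades one vanishing `Ext` for one more regular element.
  induction n generalizing a b X with
  | zero => exact hasProjectiveDimensionLE_zero_iff.1 hpd
  | succ n ih =>
    obtain ⟨m, q, hq⟩ := Module.Finite.exists_fin' R X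
    have hker := IsShortExact.ker_subtype hq
    have hpdK := hker.hasProjectiveDimensionLE_iff.1 hpd
    have hK : IsWeaklyRegular (LinearMap.ker q) (rs.take (b + 1)) :=
      hker.isWeaklyRegular_left
        (isWeaklyRegular_of_flat (isWeaklyRegular_take hrs.isWeaklyRegular _)) hX
    cases a with
    | zero =>
      have hproj : Module.Projective R (LinearMap.ker q) :=
        ih hpdK (a := 0) (by simp) hK (by omega)
      rw [List.take_of_length_le (by omega)] at hX
      exact hrs.projective_of_isShortExact hker hX
    | succ a =>
      have hproj : Module.Projective R (LinearMap.ker q) :=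
        ih hpdK (a := a) (fun i hi ↦ (ExtVanishes.iff_syzygy hker).1 (hExt (i + 1) (by omega)))
          hK (by omega)
      exact hker.projective_of_surjective_dualMap ((hExt 0 a.succ_pos).surjective_lcomp hker)

end IsMaximalRegularSequence

end MaximalRegularSequence

namespace IsKthSyzygy

variable {R : Type u} [CommRing R] {k : ℕ}

theorem congr {M N : ModuleCat.{u} R} (e : M ≃ₗ[R] N) (hM : IsKthSyzygy R k M) :
    IsKthSyzygy R k N := by
  cases k with
  | zero => trivial
  | succ k =>
    obtain ⟨P, f, hproj, hfin, hf, hC⟩ := hM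
    refine ⟨P, f ∘ₗ e.symm.toLinearMap, hproj, hfin, hf.comp e.symm.injective, ?_⟩
    rwa [LinearEquiv.range_comp]

theorem of_isShortExact {A P C : Type u} [AddCommGroup A] [Module R A] [AddCommGroup P]
    [Module R P] [AddCommGroup C] [Module R C] {f : A →ₗ[R] P} {g : P →ₗ[R] C}
    (h : IsShortExact f g) [hfin : Module.Finite R P] [hproj : Module.Projective R P]
    (hC : IsKthSyzygy R k (ModuleCat.of R C)) : IsKthSyzygy R (k + 1) (ModuleCat.of R A) :=
  ⟨ModuleCat.of R P, f, hproj, hfin, h.injective,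
    hC.congr (h.exact.linearEquivOfSurjective h.surjective).symm⟩

end IsKthSyzygy

theorem IsGDimZero.isKthSyzygy {R : Type u} [CommRing R] [IsNoetherianRing R] {G : Type u}
    [AddCommGroup G] [Module R G] (hG : IsGDimZero R G) (k : ℕ) :
    IsKthSyzygy R k (ModuleCat.of R G) := by
  induction k generalizing G with
  | zero => trivial
  | succ k ih =>
    obtain ⟨P, G', i, q, hiq, hfin, hproj, hG'⟩ := hG.exists_cosyzygy
    exact .of_isShortExact hiq (ih hG')

section Localization

variable {R : Type u} [CommRing R] (S : Submonoid R) {k n : ℕ}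
variable {A B C G X : Type u} [AddCommGroup A] [Module R A] [AddCommGroup B] [Module R B]
  [AddCommGroup C] [Module R C] [AddCommGroup G] [Module R G] [AddCommGroup X] [Module R X]
variable {f : A →ₗ[R] B} {g : B →ₗ[R] C}

theorem finite_localizedModule [Module.Finite R A] :
    Module.Finite (Localization S) (LocalizedModule S A) :=
  .of_isLocalizedModule S (LocalizedModule.mkLinearMap S A)

theorem projective_localizedModule [Module.Projective R A] :
    Module.Projective (Localization S) (LocalizedModule S A) :=
  Module.projective_of_isLocalizedModule S (LocalizedModule.mkLinearMap S A)

theorem IsShortExact.localizedModule (h : IsShortExact f g) :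
    IsShortExact (LocalizedModule.map S f) (LocalizedModule.map S g) where
  injective := LocalizedModule.map_injective S f h.injective
  exact := LocalizedModule.map_exact S f g h.exact
  surjective := LocalizedModule.map_surjective S g h.surjective

theorem IsKthSyzygy.localizedModule {M : ModuleCat.{u} R} (hM : IsKthSyzygy R k M) :
    IsKthSyzygy (Localization S) k (ModuleCat.of _ (LocalizedModule S M)) := by
  induction k generalizing M with
  | zero => trivial
  | succ k ih =>
    obtain ⟨P, f, hproj, hfin, hf, hC⟩ := hM
    have := finite_localizedModule S (A := P)
    have := projective_localizedModule S (A := P)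
    exact .of_isShortExact ((IsShortExact.mkQ_range hf).localizedModule S) (ih hC)

theorem hasProjectiveDimensionLE_localizedModule (M : ModuleCat.{u} R)
    [HasProjectiveDimensionLE M n] :
    HasProjectiveDimensionLE (ModuleCat.of (Localization S) (LocalizedModule S M)) n :=
  have := ModuleCat.localizedModule_hasProjectiveDimensionLE n S M
  ModuleCat.hasProjectiveDimensionLE_of_linearEquiv (M := M.localizedModule S)
    (N := ModuleCat.of (Localization S) (LocalizedModule S M))
    (Shrink.linearEquiv (Localization S) (LocalizedModule S M)) n

/-- The map `A* → (A_S)*` over `R` sending `φ` to `φ_S`; it is a localization at `S` when `A` is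
finitely presented. -/
noncomputable abbrev dualLocalization (A : Type u) [AddCommGroup A] [Module R A] :
    Module.Dual R A →ₗ[R] Module.Dual (Localization S) (LocalizedModule S A) :=
  IsLocalizedModule.mapExtendScalars S (LocalizedModule.mkLinearMap S A)
    (Algebra.linearMap R (Localization S)) (Localization S)

theorem dualLocalization_apply_mkLinearMap (φ : Module.Dual R A) (a : A) :
    dualLocalization S A φ (LocalizedModule.mkLinearMap S A a) =
      algebraMap R (Localization S) (φ a) :=
  IsLocalizedModule.map_apply S _ (Algebra.linearMap R (Localization S)) φ a

theorem dualMap_dualLocalization (φ : Module.Dual R B) :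
    (LocalizedModule.map S f).dualMap (dualLocalization S B φ) =
      dualLocalization S A (f.dualMap φ) := by
  refine LinearMap.restrictScalars_injective R ?_
  refine IsLocalizedModule.linearMap_ext S (LocalizedModule.mkLinearMap S A)
    (Algebra.linearMap R (Localization S)) (LinearMap.ext fun a ↦ ?_)
  have ha : LocalizedModule.map S f (LocalizedModule.mkLinearMap S A a) =
      LocalizedModule.mkLinearMap S B (f a) := LocalizedModule.map_mk S f a 1
  calc dualLocalization S B φ (LocalizedModule.map S f (LocalizedModule.mkLinearMap S A a))
      = algebraMap R _ (φ (f a)) := by rw [ha, dualLocalization_apply_mkLinearMap]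
    _ = dualLocalization S A (f.dualMap φ) (LocalizedModule.mkLinearMap S A a) :=
      (dualLocalization_apply_mkLinearMap S (f.dualMap φ) a).symm

theorem surjective_dualMap_localizedModule [Module.FinitePresentation R A]
    (hf : Function.Surjective f.dualMap) :
    Function.Surjective (LocalizedModule.map S f).dualMap := by
  intro φ
  obtain ⟨⟨h, s⟩, hs⟩ := IsLocalizedModule.surj S (dualLocalization S A) φ
  obtain ⟨ψ, rfl⟩ := hf h
  have hs' : (s : R) • φ = dualLocalization S A (f.dualMap ψ) := hs
  refine ⟨(IsLocalization.mk' (Localization S) 1 s) • dualLocalization S B ψ, ?_⟩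
  rw [map_smul, dualMap_dualLocalization, ← hs', ← algebraMap_smul (Localization S) (s : R) φ,
    smul_smul, IsLocalization.mk'_spec, map_one, one_smul]

variable [IsNoetherianRing R]

theorem ExtVanishes.localizedModule [Module.Finite R X] (hX : ExtVanishes R (n + 1) X R) :
    ExtVanishes (Localization S) (n + 1) (LocalizedModule S X) (Localization S) := by
  induction n generalizing X with
  | zero =>
    obtain ⟨m, q, hq⟩ := Module.Finite.exists_fin' R X
    have hker := IsShortExact.ker_subtype hq
    have := projective_localizedModule S (A := Fin m → R)
    have := Module.finitePresentation_of_finite R (LinearMap.ker q)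
    exact .one_of_surjective_lcomp (hker.localizedModule S)
      (surjective_dualMap_localizedModule S (hX.surjective_lcomp hker))
  | succ n ih =>
    obtain ⟨m, q, hq⟩ := Module.Finite.exists_fin' R X
    have hker := IsShortExact.ker_subtype hq
    have := projective_localizedModule S (A := Fin m → R)
    exact (iff_syzygy (hker.localizedModule S)).2 (ih ((iff_syzygy hker).1 hX))

theorem IsGDimZero.injective_dual_eval_localizedModule (hG : IsGDimZero R G) :
    Function.Injective (Module.Dual.eval (Localization S) (LocalizedModule S G)) := by
  obtain ⟨P, _, i, q, hiq, hfin, hproj, -⟩ := hG.exists_cosyzygy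
  have := finite_localizedModule S (A := P)
  have := projective_localizedModule S (A := P)
  exact injective_dual_eval_of_injective (hiq.localizedModule S).injective

theorem IsGDimZero.surjective_dual_eval_localizedModule (hG : IsGDimZero R G) :
    Function.Surjective (Module.Dual.eval (Localization S) (LocalizedModule S G)) := by
  obtain ⟨P, G', i, q, hiq, hfin, hproj, hG'⟩ := hG.exists_cosyzygy
  have := finite_localizedModule S (A := P)
  have := projective_localizedModule S (A := P)
  have := hG'.finite
  have hiqS := hiq.localizedModule S
  exact hiqS.surjective_dual_eval_left
    (((hG'.extVanishes 0).localizedModule S).surjective_lcomp hiqS)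
    (hG'.injective_dual_eval_localizedModule S)

theorem IsGDimZero.localizedModule (hG : IsGDimZero R G) :
    IsGDimZero (Localization S) (LocalizedModule S G) := by
  have := hG.finite
  have := Module.finitePresentation_of_finite R G
  have hdual : LocalizedModule S (Module.Dual R G) ≃ₗ[Localization S]
      Module.Dual (Localization S) (LocalizedModule S G) :=
    (IsLocalizedModule.iso S (dualLocalization S G)).extendScalarsOfIsLocalization S _
  exact isGDimZero_iff.2 ⟨finite_localizedModule S,
    ⟨hG.injective_dual_eval_localizedModule S, hG.surjective_dual_eval_localizedModule S⟩,
    fun n ↦ (hG.extVanishes n).localizedModule S,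
    fun n ↦ ((hG.extVanishes_dual n).localizedModule S).congr hdual⟩

end Localization

section ReducedGrade

variable {R : Type u} [CommRing R] {M N : Type u} [AddCommGroup M] [Module R M]
  [AddCommGroup N] [Module R N]

theorem one_le_rgr : 1 ≤ rgr R M := by
  refine le_sInf ?_
  rintro _ ⟨k, rfl, hk, -⟩
  exact_mod_cast hk

theorem extVanishes_of_lt_rgr {i : ℕ} (hi : ((i + 1 : ℕ) : ℕ∞) < rgr R M) :
    ExtVanishes R (i + 1) M R := by
  rw [extVanishes_iff_subsingleton_extM]
  exact not_not.1 fun hne ↦ notMem_of_lt_csInf' hi ⟨i + 1, rfl, i.succ_pos, hne⟩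

theorem rgr_congr (e : M ≃ₗ[R] N) : rgr R M = rgr R N := by
  have hExt (k : ℕ) : ExtVanishes R k M R ↔ ExtVanishes R k N R := ⟨.congr e, .congr e.symm⟩
  simp only [rgr, ← extVanishes_iff_subsingleton_extM, hExt]

end ReducedGrade

section ProjectiveCover

variable {R : Type u} [CommRing R] {A B C : Type u} [AddCommGroup A] [Module R A]
  [AddCommGroup B] [Module R B] [AddCommGroup C] [Module R C] {f : A →ₗ[R] C} {g : B →ₗ[R] C}

theorem exists_surjective_comp_eq_of_isSuperfluous_ker [Module.Projective R A]
    (hrange : LinearMap.range f = LinearMap.range g) (hg : (LinearMap.ker g).IsSuperfluous) :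
    ∃ a : A →ₗ[R] B, g ∘ₗ a = f ∧ Function.Surjective a := by
  obtain ⟨a, ha⟩ := Module.projective_lifting_property g.rangeRestrict
    (f.codRestrict (LinearMap.range g) fun x ↦ hrange ▸ LinearMap.mem_range_self f x)
    g.surjective_rangeRestrict
  have hga (x : A) : g (a x) = f x := congrArg Subtype.val (LinearMap.congr_fun ha x)
  refine ⟨a, LinearMap.ext hga, LinearMap.range_eq_top.1 (hg _ (eq_top_iff.2 fun y _ ↦ ?_))⟩
  obtain ⟨x, hx⟩ : g y ∈ LinearMap.range f := hrange ▸ LinearMap.mem_range_self g y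
  rw [← add_sub_cancel (a x) y]
  exact Submodule.add_mem_sup (LinearMap.mem_range_self a x)
    (by rw [LinearMap.mem_ker, map_sub, hga, hx, sub_self])

theorem exists_linearEquiv_comp_eq_of_isSuperfluous_ker [Module.Projective R A]
    [Module.Finite R A] [Module.Projective R B]
    (hrange : LinearMap.range f = LinearMap.range g) (hf : (LinearMap.ker f).IsSuperfluous)
    (hg : (LinearMap.ker g).IsSuperfluous) : ∃ e : A ≃ₗ[R] B, g ∘ₗ e.toLinearMap = f := by
  obtain ⟨a, hga, ha⟩ := exists_surjective_comp_eq_of_isSuperfluous_ker hrange hg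
  obtain ⟨b, -, hb⟩ := exists_surjective_comp_eq_of_isSuperfluous_ker hrange.symm hf
  have hinj : Function.Injective (b ∘ₗ a) :=
    OrzechProperty.injective_of_surjective_endomorphism _ (hb.comp ha)
  exact ⟨.ofBijective a ⟨.of_comp hinj, ha⟩, hga⟩

end ProjectiveCover

namespace MinRes

variable {R : Type u} [CommRing R] {M : Type u} [AddCommGroup M] [Module R M]

theorem exists_linearEquiv_presentation (F F' : MinRes R M) :
    ∃ (e₀ : F.P 0 ≃ₗ[R] F'.P 0) (e₁ : F.P 1 ≃ₗ[R] F'.P 1),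
      F'.d 0 ∘ₗ e₁.toLinearMap = e₀.toLinearMap ∘ₗ F.d 0 := by
  have := F.projective
  have := F.finite
  have := F'.projective
  obtain ⟨e₀, he₀⟩ := exists_linearEquiv_comp_eq_of_isSuperfluous_ker
    ((LinearMap.range_eq_top.2 F.surj).trans (LinearMap.range_eq_top.2 F'.surj).symm)
    F.min_eps F'.min_eps
  have hrange : LinearMap.range (e₀.toLinearMap ∘ₗ F.d 0) = LinearMap.range (F'.d 0) := by
    rw [LinearMap.range_comp, F.exact0, F'.exact0, ← he₀, LinearMap.ker_comp,
      Submodule.map_comap_eq_of_surjective e₀.surjective]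
  have hker : (LinearMap.ker (e₀.toLinearMap ∘ₗ F.d 0)).IsSuperfluous := by
    rw [LinearEquiv.ker_comp]
    exact F.min_d 0
  exact ⟨e₀, exists_linearEquiv_comp_eq_of_isSuperfluous_ker hrange hker (F'.min_d 0)⟩

theorem nonempty_lambdaMod_linearEquiv (F F' : MinRes R M) :
    Nonempty (F.lambdaMod ≃ₗ[R] F'.lambdaMod) := by
  obtain ⟨e₀, e₁, he⟩ := F.exists_linearEquiv_presentation F'
  refine ⟨(e₁.dualMap.ofSubmodules (LinearMap.range (F'.d 0).dualMap)
    (LinearMap.range (F.d 0).dualMap) ?_).symm⟩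
  calc (LinearMap.range (F'.d 0).dualMap).map e₁.dualMap.toLinearMap
      = LinearMap.range (F'.d 0 ∘ₗ e₁.toLinearMap).dualMap :=
        (LinearMap.range_comp (F'.d 0).dualMap e₁.dualMap.toLinearMap).symm
    _ = LinearMap.range ((F.d 0).dualMap ∘ₗ e₀.dualMap.toLinearMap) := by rw [he]; rfl
    _ = LinearMap.range (F.d 0).dualMap := LinearEquiv.range_comp _ _

variable (F : MinRes R M)

theorem isShortExact_range_subtype_ε : IsShortExact (LinearMap.range (F.d 0)).subtype F.ε := by
  rw [F.exact0]
  exact .ker_subtype F.surj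

theorem isShortExact_range_subtype (k : ℕ) :
    IsShortExact (LinearMap.range (F.d (k + 1))).subtype (F.d k).rangeRestrict :=
  .range_subtype (LinearMap.exact_iff.2 (F.exact k).symm)

variable {F} {k j : ℕ}

theorem extVanishes_range (h : ExtVanishes R (k + j + 2) M R) :
    ExtVanishes R (j + 1) (LinearMap.range (F.d k)) R := by
  induction k generalizing j with
  | zero =>
    have := F.projective 0
    rw [zero_add] at h
    exact (ExtVanishes.iff_syzygy F.isShortExact_range_subtype_ε).1 h
  | succ k ih =>
    have := F.projective (k + 1)
    refine (ExtVanishes.iff_syzygy (F.isShortExact_range_subtype k)).1 (ih (j := j + 1) ?_)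
    rwa [← Nat.add_assoc, Nat.add_right_comm k j 1]

theorem surjective_dualMap_range_subtype (h : ExtVanishes R (k + 1) M R) :
    Function.Surjective (LinearMap.range (F.d k)).subtype.dualMap := by
  cases k with
  | zero => exact h.surjective_lcomp F.isShortExact_range_subtype_ε
  | succ k => exact (extVanishes_range (j := 0) h).surjective_lcomp (F.isShortExact_range_subtype k)

theorem exact_dualMap (h : ExtVanishes R (k + 1) M R) :
    Function.Exact (F.d k).dualMap (F.d (k + 1)).dualMap := by
  have hfactor : (F.d k).dualMap =
      (F.d k).rangeRestrict.dualMap ∘ₗ (LinearMap.range (F.d k)).subtype.dualMap := rfl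
  have hexact : Function.Exact (F.d (k + 1)) (F.d k).rangeRestrict := by
    rw [LinearMap.exact_iff, LinearMap.ker_rangeRestrict, F.exact k]
  rw [hfactor, LinearMap.exact_iff, LinearMap.range_comp_of_range_eq_top _
    (LinearMap.range_eq_top.2 (surjective_dualMap_range_subtype h)), ← LinearMap.exact_iff]
  exact LinearMap.exact_lcomp_of_exact_of_surjective R hexact (F.d k).surjective_rangeRestrict

theorem isKthSyzygy_range_dualMap {b : ℕ} (h : ∀ i < b, ExtVanishes R (k + i + 1) M R) :
    IsKthSyzygy R (b + 1) (ModuleCat.of R (LinearMap.range (F.d k).dualMap)) := by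
  have := F.projective (k + 1)
  have := F.finite (k + 1)
  induction b generalizing k with
  | zero => exact .of_isShortExact (.mkQ_range (Submodule.subtype_injective _)) trivial
  | succ b ih =>
    have hshift : ∀ i < b, ExtVanishes R (k + 1 + i + 1) M R := fun i hi ↦ by
      rw [Nat.add_right_comm k 1 i]
      exact h (i + 1) (Nat.succ_lt_succ hi)
    exact .of_isShortExact (.range_subtype (exact_dualMap (h 0 b.succ_pos)))
      (ih hshift (F.projective _) (F.finite _))

theorem isKthSyzygy_lambdaMod {b : ℕ} (hb : (b : ℕ∞) ≤ rgr R M) :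
    IsKthSyzygy R b (ModuleCat.of R F.lambdaMod) := by
  cases b with
  | zero => trivial
  | succ b =>
    refine isKthSyzygy_range_dualMap fun i hi ↦ ?_
    rw [zero_add]
    exact extVanishes_of_lt_rgr (hb.trans_lt' (Nat.cast_lt.2 (Nat.succ_lt_succ hi)))

end MinRes

theorem IsHorizontallyLinked.isKthSyzygy {R : Type u} [CommRing R] {M : Type u} [AddCommGroup M]
    [Module R M] (hM : IsHorizontallyLinked R M) (F : MinRes R M) {b : ℕ}
    (hb : (b : ℕ∞) ≤ rgr R F.lambdaMod) : IsKthSyzygy R b (ModuleCat.of R M) := by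
  obtain ⟨F', G, ⟨e⟩⟩ := hM
  obtain ⟨e'⟩ := F.nonempty_lambdaMod_linearEquiv F'
  rw [rgr_congr e'] at hb
  exact (G.isKthSyzygy_lambdaMod hb).congr e

section GDim

variable {R : Type u} [CommRing R]

theorem IsGDimZero.gDim_eq_zero {M : Type u} [AddCommGroup M] [Module R M]
    (hM : IsGDimZero R M) : GDim R M = 0 :=
  nonpos_iff_eq_zero.1 (sInf_le ⟨0, rfl, hM⟩)

theorem exists_gDimLE_of_gDim_lt_top {M : Type u} [AddCommGroup M] [Module R M]
    (hM : GDim R M < ⊤) : ∃ n, GDimLE R n (ModuleCat.of R M) := by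
  obtain ⟨_, ⟨n, -, hn⟩, -⟩ := sInf_lt_iff.1 hM
  exact ⟨n, hn⟩

theorem exists_nat_le_add_of_le_add_sub_one {d : ℕ} {r s : ℕ∞} (hr : 1 ≤ r) (h : d ≤ r + s - 1) :
    ∃ a b : ℕ, (a + 1 : ℕ) ≤ r ∧ b ≤ s ∧ d ≤ a + b := by
  induction r using ENat.recTopCoe with
  | top => exact ⟨d, 0, le_top, by simp, le_rfl⟩
  | coe r =>
    induction s using ENat.recTopCoe with
    | top => exact ⟨0, d, by simpa using hr, le_top, by simp⟩
    | coe s =>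
      norm_cast at hr h
      exact ⟨r - 1, s, by exact_mod_cast (by omega), le_rfl, by omega⟩

theorem GDimLE.isGDimZero_localizedModule [IsNoetherianRing R] {n : ℕ} {M : ModuleCat.{u} R}
    (hM : GDimLE R n M) {s : ℕ∞} (hsyz : ∀ b : ℕ, (b : ℕ∞) ≤ s → IsKthSyzygy R b M)
    (p : Ideal R) [p.IsPrime] (hp : locRingDepth R p ≤ rgr R M + s - 1) :
    IsGDimZero (Localization.AtPrime p) (LocalizedModule p.primeCompl M) := by
  obtain ⟨X, G, f, g, hfg, hXfin, hpd, hG⟩ := hM.exists_finite_projective_hull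
  obtain ⟨rs, hrs⟩ := exists_isMaximalRegularSequence (Localization.AtPrime p)
  obtain ⟨a, b, ha, hb, hlen⟩ :=
    exists_nat_le_add_of_le_add_sub_one one_le_rgr (hrs.length_le_rdepth.trans hp)
  have hfgp := hfg.localizedModule p.primeCompl
  have hGp := hG.localizedModule p.primeCompl
  have hExt : ∀ i < a, ExtVanishes R (i + 1) X R := fun i hi ↦ .of_isShortExact_middle hfg
    (extVanishes_of_lt_rgr (ha.trans_lt' (Nat.cast_lt.2 (Nat.succ_lt_succ hi)))) (hG.extVanishes i)
  have hreg := hfgp.isWeaklyRegular_middle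
    (((hsyz b hb).localizedModule p.primeCompl).isWeaklyRegular_take hrs.isWeaklyRegular)
    ((hGp.isKthSyzygy b).isWeaklyRegular_take hrs.isWeaklyRegular)
  have hXpfin := finite_localizedModule p.primeCompl (A := X)
  have hXpproj := hrs.projective_of_hasProjectiveDimensionLE
    (hasProjectiveDimensionLE_localizedModule p.primeCompl X (n := n))
    (fun i hi ↦ (hExt i hi).localizedModule p.primeCompl) hreg hlen
  exact .of_isShortExact_left hfgp hGp

end GDim

section Statements

variable (R : Type u) [CommRing R] [IsNoetherianRing R]

theorem stmt4 (M : Type u) [AddCommGroup M] [Module R M] [Module.Finite R M]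
    (F : MinRes R M) (hHL : IsHorizontallyLinked R M)
    (h0 : 0 < GDim R M) (hfin : GDim R M < ⊤) :
    ∀ (p : Ideal R) (h : p.IsPrime), haveI := h;
      locRingDepth R p ≤ rgr R M + rgr R F.lambdaMod - 1 → locGDim R p M = 0 := by
  intro p h hp
  obtain ⟨n, hn⟩ := exists_gDimLE_of_gDim_lt_top hfin
  exact (hn.isGDimZero_localizedModule (fun b hb ↦ hHL.isKthSyzygy F hb) p hp).gDim_eq_zero

end Statements
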